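/- Let T be a string of length n and 1 ≤ i ≤ j ≤ n. Then there exists a j-active position in [i, j], and if μ is the smallest j-active position with i ≤ μ ≤ j, then T[μ..j] is the maximal suffix of T[i..j]. -/

import Mathlib

/-!
The nonempty suffixes of `T[i..j]` are the strings `T[q..j]` with `i ≤ q ≤ j`, and `q` is
`j`-active iff `T[q..j]` is largest among the `T[p..j]` with `q ≤ p ≤ j`. A position `q` at which
`T[q..j]` is largest over all of `[i, j]` is therefore active, so the smallest active position `μ`
satisfies `μ ≤ q`; activity of `μ` then gives `T[q..j] ⪯ T[μ..j]`.
-/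

variable {α : Type*} [LinearOrder α]

/-- `substr T i j` is the 1-indexed substring `T[i..j]` (inclusive). -/
def substr (T : List α) (i j : ℕ) : List α := (T.drop (i - 1)).take (j - i + 1)

/-- Position `p` is `j`-active in `T`: there is no position `p'` with `p < p' ≤ j` and
`T[p'..j] ≻ T[p..j]`. -/
def JActive (T : List α) (p j : ℕ) : Prop :=
  ∀ p', p < p' → p' ≤ j → ¬ List.Lex (· < ·) (substr T p j) (substr T p' j)

/-- `s` is the lexicographically maximal nonempty suffix of `w`. -/
def IsMaxSuffix (w s : List α) : Prop :=
  s ≠ [] ∧ s <:+ w ∧ ∀ t, t ≠ [] → t <:+ w → ¬ List.Lex (· < ·) s t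

theorem isMaxOn_Icc_of_isLeast {ι β : Type*} [Preorder ι] [LocallyFiniteOrder ι] [LinearOrder β]
    {f : ι → β} {i j μ : ι}
    (hμ : IsLeast {q ∈ Set.Icc i j | IsMaxOn f (Set.Icc q j) q} μ) :
    IsMaxOn f (Set.Icc i j) μ := by
  obtain ⟨⟨hμ_mem, hμ_max⟩, hμ_le⟩ := hμ
  obtain ⟨q, hq_mem, hq_max⟩ :=
    Set.exists_max_image (Set.Icc i j) f (Set.finite_Icc i j) ⟨μ, hμ_mem⟩
  have hq_tail : IsMaxOn f (Set.Icc q j) q :=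
    IsMaxOn.on_subset hq_max (Set.Icc_subset_Icc_left hq_mem.1)
  have hμq : μ ≤ q := hμ_le ⟨hq_mem, hq_tail⟩
  exact fun p hp => (hq_max p hp).trans (hμ_max ⟨hμq, hq_mem.2⟩)

section Substring

variable {β : Type*} {T : List β} {i j p : ℕ}

theorem substr_eq_drop_substr (hi : 1 ≤ i) (hip : i ≤ p) (hpj : p ≤ j) :
    substr T p j = (substr T i j).drop (p - i) := by
  unfold substr
  rw [List.drop_take, List.drop_drop]
  congr 2 <;> omega

theorem length_substr (hi : 1 ≤ i) (hij : i ≤ j) (hj : j ≤ T.length) :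
    (substr T i j).length = j - i + 1 := by
  simp only [substr, List.length_take, List.length_drop]
  omega

theorem ne_nil_and_suffix_substr_iff (hi : 1 ≤ i) (hij : i ≤ j) (hj : j ≤ T.length) {t : List β} :
    t ≠ [] ∧ t <:+ substr T i j ↔ ∃ q ∈ Set.Icc i j, substr T q j = t := by
  have hlen := length_substr hi hij hj
  constructor
  · rintro ⟨ht, hsuffix⟩
    have hle := hsuffix.length_le
    have hpos := List.length_pos_iff.mpr ht
    refine ⟨j + 1 - t.length, ⟨by omega, by omega⟩, ?_⟩
    rw [substr_eq_drop_substr hi (by omega) (by omega), List.suffix_iff_eq_drop.mp hsuffix,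
      List.length_drop]
    congr 1
    omega
  · rintro ⟨q, ⟨hiq, hqj⟩, rfl⟩
    refine ⟨List.ne_nil_of_length_eq_add_one (length_substr (hi.trans hiq) hqj hj), ?_⟩
    rw [substr_eq_drop_substr hi hiq hqj]
    exact List.drop_suffix _ _

end Substring

section Activity

variable {T : List α} {i j p : ℕ}

theorem not_lex_lt_iff_le {s t : List α} : ¬ List.Lex (· < ·) s t ↔ t ≤ s :=
  not_lt (a := s) (b := t)

theorem jActive_iff_isMaxOn : JActive T p j ↔ IsMaxOn (substr T · j) (Set.Icc p j) p := by
  simp only [JActive, not_lex_lt_iff_le, isMaxOn_iff, Set.mem_Icc, and_imp]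
  refine ⟨fun h q hpq hqj => ?_, fun h q hpq hqj => h q hpq.le hqj⟩
  rcases hpq.eq_or_lt with rfl | hlt
  · exact le_rfl
  · exact h q hlt hqj

theorem jActive_self (T : List α) (j : ℕ) : JActive T j j :=
  fun _ hlt hle => absurd hlt hle.not_gt

theorem isMaxSuffix_substr_iff (hi : 1 ≤ i) (hj : j ≤ T.length) (hp : p ∈ Set.Icc i j) :
    IsMaxSuffix (substr T i j) (substr T p j) ↔ IsMaxOn (substr T · j) (Set.Icc i j) p := by
  simp only [IsMaxSuffix, ← and_assoc, ← and_imp,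
    ne_nil_and_suffix_substr_iff hi (hp.1.trans hp.2) hj, not_lex_lt_iff_le, isMaxOn_iff]
  constructor
  · exact fun ⟨_, hmax⟩ q hq => hmax _ ⟨q, hq, rfl⟩
  · refine fun hmax => ⟨⟨p, hp, rfl⟩, ?_⟩
    rintro _ ⟨q, hq, rfl⟩
    exact hmax q hq

end Activity

/-- Let `T` be a string of length `n` and `1 ≤ i ≤ j ≤ n`.  Then there exists a `j`-active
position in `[i, j]`, and if `μ` is the smallest `j`-active position with `i ≤ μ ≤ j`, then
`T[μ..j]` is the maximal suffix of `T[i..j]`. -/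
theorem stmt_12 (T : List α) (i j : ℕ)
    (hi : 1 ≤ i) (hij : i ≤ j) (hj : j ≤ T.length) :
    (∃ q, i ≤ q ∧ q ≤ j ∧ JActive T q j) ∧
    ∀ μ, i ≤ μ → μ ≤ j → JActive T μ j →
      (∀ q, i ≤ q → q ≤ j → JActive T q j → μ ≤ q) →
      IsMaxSuffix (substr T i j) (substr T μ j) := by
  refine ⟨⟨j, hij, le_rfl, jActive_self T j⟩, fun μ hiμ hμj hμ hmin => ?_⟩
  rw [isMaxSuffix_substr_iff hi hj ⟨hiμ, hμj⟩]
  apply isMaxOn_Icc_of_isLeast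
  simp only [← jActive_iff_isMaxOn]
  exact ⟨⟨⟨hiμ, hμj⟩, hμ⟩, fun q hq => hmin q hq.1.1 hq.1.2 hq.2⟩
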